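/- arXiv:1606.05139 — 2 statements merged into one kernel-verified Lean document; each statement's English description precedes it below -/
import Mathlib

section
/- Let f_1,…,f_n : ℝ → ℝ be continuous, linearly independent functions such that f_1∧⋯∧f_n/Δ_n extends continuously to ℝ^n, and let z_1,…,z_n ∈ ℝ be such that the matrix A with (j,k)-th entry f_k(z_j) is invertible. Then for each k ∈ {1,…,n} and all x_2,…,x_n ∈ ℝ, f_1∧⋯∧f_{k−1}∧f_{k+1}∧⋯∧f_n(x_2,…,x_n) = (−1)^{k+1} ∑_{j=1}^n (A^{-1})_{kj} · f_1∧⋯∧f_n(z_j, x_2,…,x_n). -/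
open Finset

/-- Vandermonde determinant Δ_n(x) = ∏_{i<j} (x_i - x_j). -/
noncomputable def vdm {n : ℕ} (x : Fin n → ℝ) : ℝ :=
  ∏ i, ∏ j ∈ Finset.Ioi i, (x i - x j)

/-- f_1 ∧ ⋯ ∧ f_n (x) = det [f_i(x_j)]. -/
noncomputable def wedge {n : ℕ} (f : Fin n → ℝ → ℝ) (x : Fin n → ℝ) : ℝ :=
  Matrix.det (Matrix.of fun i j => f i (x j))

/-- `F` is a continuous extension to ℝ^n of the ratio (f_1∧⋯∧f_n)/Δ_n, which is
defined on points with pairwise distinct coordinates. -/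
def ExtendsRatio {n : ℕ} (f : Fin n → ℝ → ℝ) (F : (Fin n → ℝ) → ℝ) : Prop :=
  Continuous F ∧ ∀ x : Fin n → ℝ, Function.Injective x → F x = wedge f x / vdm x

/-!
Laplace expansion along the first column writes `f₁ ∧ ⋯ ∧ fₙ (zⱼ, x₂, …, xₙ)` as the `j`-th
coordinate of `A` applied to the vector of signed minors of `f` at `(x₂, …, xₙ)`. Applying `A⁻¹`
recovers that vector.
-/

section Alternant

open Matrix

variable {R α : Type*} [CommRing R] {n : ℕ}

/-- The alternant `det [f i (x j)]` of a tuple of functions at a tuple of points. It agrees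
definitionally with `wedge` for real functions; here the functions go from an arbitrary type to a
commutative ring. -/
def alternant (f : Fin n → α → R) (x : Fin n → α) : R :=
  det (of fun i j => f i (x j))

/-- The signed maximal minors of the matrix `[f i (x j)]`, which has one row more than it has
columns: the cofactors of the column to be adjoined in front. Indices start at `0`, so the sign of
the minor without row `k` is `(-1) ^ k`. -/
def signedMinors (f : Fin (n + 1) → α → R) (x : Fin n → α) (k : Fin (n + 1)) : R :=
  (-1) ^ (k : ℕ) * alternant (fun i => f (k.succAbove i)) x

theorem neg_one_pow_mul_signedMinors (f : Fin (n + 1) → α → R) (x : Fin n → α)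
    (k : Fin (n + 1)) :
    (-1) ^ (k : ℕ) * signedMinors f x k = alternant (fun i => f (k.succAbove i)) x := by
  rw [signedMinors, ← mul_assoc, ← mul_pow, neg_one_mul, neg_neg, one_pow, one_mul]

theorem alternant_cons (f : Fin (n + 1) → α → R) (a : α) (x : Fin n → α) :
    alternant f (Fin.cons a x) = ∑ k, f k a * signedMinors f x k := by
  rw [alternant, det_succ_column_zero]
  refine Finset.sum_congr rfl fun k _ => ?_
  have submatrix_eq : (of fun i j => f i ((Fin.cons a x : Fin (n + 1) → α) j)).submatrix
      k.succAbove Fin.succ = of fun i j => f (k.succAbove i) (x j) := by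
    ext i j
    simp only [submatrix_apply, of_apply, Fin.cons_succ]
  rw [submatrix_eq, of_apply, Fin.cons_zero, signedMinors, alternant]
  ring

theorem mulVec_signedMinors {ι : Type*} (f : Fin (n + 1) → α → R) (z : ι → α) (x : Fin n → α) :
    (of fun j k => f k (z j)) *ᵥ signedMinors f x = fun j => alternant f (Fin.cons (z j) x) :=
  funext fun j => (alternant_cons f (z j) x).symm

theorem minor_from_inverse_general (f : Fin (n + 1) → α → R) (z : Fin (n + 1) → α)
    (A : Matrix (Fin (n + 1)) (Fin (n + 1)) R) (hA : A = of fun j k => f k (z j))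
    (hAinv : IsUnit A) (k : Fin (n + 1)) (x : Fin n → α) :
    alternant (fun i => f (k.succAbove i)) x =
      (-1) ^ (k : ℕ) * ∑ j, A⁻¹ k j * alternant f (Fin.cons (z j) x) := by
  have := hAinv.invertible
  have solve : A⁻¹ *ᵥ (fun j => alternant f (Fin.cons (z j) x)) = signedMinors f x :=
    inv_mulVec_eq_vec (by rw [hA, mulVec_signedMinors])
  rw [← neg_one_pow_mul_signedMinors, ← solve, mulVec, dotProduct]

end Alternant

/-- Laplace-expansion recovery of the minors: with the matrix `A` with (j,k)-th entry
`f_k(z_j)` invertible, for each `k`,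
f_1∧⋯∧f_{k−1}∧f_{k+1}∧⋯∧f_n (x_2,…,x_n)
  = (−1)^{k+1} ∑_j (A⁻¹)_{k j} · f_1∧⋯∧f_n (z_j, x_2,…,x_n).
(Here indices are 0-based, so the 1-based sign (−1)^{k+1} reads (−1)^k.) -/
theorem minor_from_inverse (n : ℕ) (f : Fin (n + 1) → ℝ → ℝ)
    (hf : ∀ i, Continuous (f i))
    (hli : LinearIndependent ℝ f)
    (F : (Fin (n + 1) → ℝ) → ℝ) (hF : ExtendsRatio f F)
    (z : Fin (n + 1) → ℝ)
    (A : Matrix (Fin (n + 1)) (Fin (n + 1)) ℝ)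
    (hA : A = Matrix.of fun j k => f k (z j))
    (hAinv : IsUnit A) :
    ∀ (k : Fin (n + 1)) (x : Fin n → ℝ),
      wedge (fun i : Fin n => f (k.succAbove i)) x =
        (-1 : ℝ) ^ (k : ℕ) *
          ∑ j : Fin (n + 1), A⁻¹ k j * wedge f (Fin.cons (z j) x) :=
  minor_from_inverse_general f z A hA hAinv
end

section
/- Let f_1,…,f_n : ℝ → ℝ be (n−1)-times continuously differentiable. Then the function x ↦ det[f_i(x_j)]_{i,j=1}^n/Δ_n(x), defined on points of ℝ^n with pairwise distinct coordinates, extends continuously to ℝ^n, and its value at the diagonal point (x,…,x) equals c_n · det[f_i^{(n−j)}(x)]_{i,j=1}^n, where f_i^{(m)} denotes the m-th derivative of f_i. In particular, in this case the generalized Wronskian W(f_1,…,f_n)(x) equals det[f_i^{(n−j)}(x)]_{i,j=1}^n, the classical Wronskian determinant. -/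
/-!
Multiplying the matrix `(f_i(x_j))` on the right by the triangular matrix of Lagrange nodal weights
of the node sets `{x_j, …, x_n}` has two effects: the determinant is divided by `Δ_n(x)`, and the
`(i, j)` entry becomes the divided difference of `f_i` at `x_j, …, x_n`. By the Hermite–Genocchi
formula a divided difference of order `k` is an iterated integral of `f_i^{(k)}` at convex
combinations of the nodes, which makes sense for coinciding nodes too: it is continuous in the
nodes and equals `f_i^{(k)}(x) / k!` when all of them are `x`.
-/

open Finset

/-- c_n⁻¹ = ∏_{i=1}^{n-1} i!. -/
noncomputable def cInv (n : ℕ) : ℝ := ∏ i ∈ Finset.range n, (Nat.factorial i : ℝ)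

section DividedDifference

open Lagrange (nodalWeight)

variable {ι F E : Type*} [DecidableEq ι] [Field F] [AddCommGroup E] [Module F E]
  {s : Finset ι} {a i : ι} {v : ι → F}

/-- The divided difference of `g` at the nodes `v i`, `i ∈ s`, in Lagrange form; with the node
sets `Ici j` it gives the matrix entries after division by the Vandermonde determinant. It is
meaningful only for distinct nodes: otherwise some weights contain the junk factor `0⁻¹ = 0`. -/
def dividedDiff (s : Finset ι) (v : ι → F) (g : F → E) : E :=
  ∑ i ∈ s, nodalWeight s v i • g (v i)

lemma dividedDiff_singleton (a : ι) (v : ι → F) (g : F → E) :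
    dividedDiff {a} v g = g (v a) := by
  simp [dividedDiff, nodalWeight]

lemma nodalWeight_insert_of_mem (ha : a ∉ s) (hi : i ∈ s) :
    nodalWeight (insert a s) v i = (v i - v a)⁻¹ * nodalWeight s v i := by
  have hai : a ≠ i := (ne_of_mem_of_not_mem hi ha).symm
  rw [nodalWeight, erase_insert_of_ne hai,
    prod_insert fun h => ha (mem_of_mem_erase h), nodalWeight]

lemma nodalWeight_insert_self (hs : s.Nonempty) (hv : Set.InjOn v s) (ha : ∀ i ∈ s, v a ≠ v i) :
    nodalWeight (insert a s) v a =
      ∑ i ∈ s, nodalWeight s v i * (v a - v i)⁻¹ := by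
  have barycentric := Lagrange.eval_interpolate_not_at_node 1 ha
  rw [Lagrange.interpolate_one hv hs] at barycentric
  simp only [Polynomial.eval_one, Pi.one_apply, mul_one] at barycentric
  rw [Lagrange.nodalWeight_eq_eval_nodal_erase_inv, erase_insert fun h => ha a h rfl]
  exact inv_eq_of_mul_eq_one_right barycentric.symm

lemma dividedDiff_insert (hs : s.Nonempty) (hv : Set.InjOn v s) (ha : ∀ i ∈ s, v a ≠ v i)
    (g : F → E) : dividedDiff (insert a s) v g = dividedDiff s v (slope g (v a)) := by
  have ha' : a ∉ s := fun h => ha a h rfl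
  rw [dividedDiff, sum_insert ha', nodalWeight_insert_self hs hv ha, sum_smul, ← sum_add_distrib]
  refine sum_congr rfl fun i hi => ?_
  rw [nodalWeight_insert_of_mem ha' hi, slope_def_module, ← neg_sub (v i) (v a), inv_neg]
  module

lemma nodalWeight_homothety (hi : i ∈ s) (c t : F) :
    nodalWeight s (fun j => c + t * (v j - c)) i =
      t⁻¹ ^ (#s - 1) * nodalWeight s v i := by
  have scaled (j : ι) : (c + t * (v i - c) - (c + t * (v j - c)))⁻¹ = t⁻¹ * (v i - v j)⁻¹ := by
    rw [← mul_inv]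
    ring
  simp only [nodalWeight, scaled, prod_mul_distrib, prod_const, card_erase_of_mem hi]

lemma det_dividedDiff_Ici {n : Type*} [LinearOrder n] [Fintype n] [LocallyFiniteOrderTop n]
    (f : n → F → F) (v : n → F) :
    Matrix.det (Matrix.of fun i j => dividedDiff (Ici j) v (f i)) =
      Matrix.det (Matrix.of fun i j => f i (v j)) / ∏ i, ∏ j ∈ Ioi i, (v i - v j) := by
  let W : Matrix n n F :=
    Matrix.of fun i j => if j ≤ i then nodalWeight (Ici j) v i else 0
  have W_lower : W.IsLowerTriangular := fun i j hij => if_neg (not_le.2 hij)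
  have W_diag (i : n) : W i i = (∏ j ∈ Ioi i, (v i - v j))⁻¹ := by
    simp [W, nodalWeight, Ici_erase]
  have eq_mul : (Matrix.of fun i j => dividedDiff (Ici j) v (f i)) =
      (Matrix.of fun i j => f i (v j)) * W := by
    ext i j
    simp [W, dividedDiff, Matrix.mul_apply, ← sum_filter, filter_le_eq_Ici, mul_comm]
  rw [eq_mul, Matrix.det_mul, Matrix.det_of_isLowerTriangular W W_lower]
  simp only [W_diag, prod_inv_distrib, div_eq_mul_inv]

end DividedDifference

section HermiteGenocchi

open Lagrange (nodalWeight)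

variable {ι E : Type*} [NormedAddCommGroup E] [NormedSpace ℝ E] [CompleteSpace E] {f : ℝ → E}

lemma slope_eq_integral_deriv (hf : ContDiff ℝ 1 f) {a b : ℝ} (hab : a ≠ b) :
    slope f a b = ∫ t in (0 : ℝ)..1, deriv f (a + t * (b - a)) := by
  have ftc := intervalIntegral.integral_unitInterval_deriv_eq_sub (f := f) (f' := deriv f)
    (z₀ := a) (z₁ := b - a) (by have := hf.continuous_deriv_one; fun_prop)
    fun t _ => (hf.differentiable_one _).hasDerivAt
  rw [add_sub_cancel] at ftc
  rw [slope_def_module, ← ftc, inv_smul_smul₀ (sub_ne_zero.2 hab.symm)]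
  simp only [smul_eq_mul]

lemma dividedDiff_insert_eq_integral [DecidableEq ι] (hf : ContDiff ℝ 1 f) {s : Finset ι} {a : ι}
    {k : ℕ} {v : ι → ℝ} (hs : #s = k + 1) (hv : Set.InjOn v s) (ha : ∀ i ∈ s, v a ≠ v i) :
    dividedDiff (insert a s) v f =
      ∫ t in (0 : ℝ)..1, t ^ k • dividedDiff s (fun j => v a + t * (v j - v a)) (deriv f) := by
  have := hf.continuous_deriv_one
  calc dividedDiff (insert a s) v f
      = ∑ i ∈ s, nodalWeight s v i • slope f (v a) (v i) :=
        dividedDiff_insert (card_pos.1 (by lia)) hv ha f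
    _ = ∑ i ∈ s, ∫ t in (0 : ℝ)..1, nodalWeight s v i • deriv f (v a + t * (v i - v a)) :=
        sum_congr rfl fun i hi => by
          rw [slope_eq_integral_deriv hf (ha i hi), intervalIntegral.integral_smul]
    _ = ∫ t in (0 : ℝ)..1, ∑ i ∈ s, nodalWeight s v i • deriv f (v a + t * (v i - v a)) :=
        (intervalIntegral.integral_finsetSum fun i _ =>
          Continuous.intervalIntegrable (by fun_prop) _ _).symm
    _ = ∫ t in (0 : ℝ)..1,
          t ^ k • dividedDiff s (fun j => v a + t * (v j - v a)) (deriv f) := by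
        refine intervalIntegral.integral_congr_Ioo_of_le zero_le_one fun t ht => ?_
        simp only [dividedDiff, smul_sum]
        refine sum_congr rfl fun i hi => ?_
        rw [nodalWeight_homothety hi, hs, Nat.add_sub_cancel, smul_smul, ← mul_assoc, ← mul_pow,
          mul_inv_cancel₀ ht.1.ne', one_pow, one_mul]

theorem exists_continuous_extension_dividedDiff [DecidableEq ι] {k : ℕ} (hf : ContDiff ℝ k f)
    {s : Finset ι} (hs : #s = k + 1) :
    ∃ G : (ι → ℝ) → E, Continuous G ∧ (∀ v, Set.InjOn v s → G v = dividedDiff s v f) ∧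
      ∀ x, G (fun _ => x) = (k.factorial : ℝ)⁻¹ • iteratedDeriv k f x := by
  induction k generalizing f s with
  | zero =>
    obtain ⟨a, rfl⟩ := card_eq_one.1 hs
    have hc := hf.continuous
    exact ⟨fun v => f (v a), by fun_prop, fun v _ => (dividedDiff_singleton a v f).symm, by simp⟩
  | succ k ih =>
    obtain ⟨a, s, ha, rfl, hcard⟩ := card_eq_succ.1 hs
    obtain ⟨G, G_cont, G_eq, G_diag⟩ := ih hf.deriv' hcard
    refine ⟨fun v => ∫ t in (0 : ℝ)..1, t ^ k • G fun j => v a + t * (v j - v a),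
      ?_, fun v hv => ?_, fun x => ?_⟩
    · exact intervalIntegral.continuous_parametric_intervalIntegral_of_continuous'
        (by fun_prop) _ _
    · rw [coe_insert, Set.injOn_insert (mem_coe.not.2 ha)] at hv
      rw [dividedDiff_insert_eq_integral (hf.of_le (by simp)) hcard hv.1
        fun i hi h => hv.2 ⟨i, hi, h.symm⟩]
      refine intervalIntegral.integral_congr_Ioo_of_le zero_le_one fun t ht => ?_
      have inj : Set.InjOn (fun j => v a + t * (v j - v a)) s := fun i hi j hj hij =>
        hv.1 hi hj (sub_left_injective (mul_left_cancel₀ ht.1.ne' (add_left_cancel hij)))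
      simp only [G_eq _ inj]
    · simp only [sub_self, mul_zero, add_zero, G_diag, intervalIntegral.integral_smul_const,
        ← iteratedDeriv_succ', smul_smul]
      congr 1
      simp [Nat.factorial_succ, mul_comm]

end HermiteGenocchi

lemma cInv_ne_zero (n : ℕ) : cInv n ≠ 0 :=
  prod_ne_zero_iff.2 fun i _ => Nat.cast_ne_zero.2 i.factorial_ne_zero

lemma inv_cInv_eq_prod_fin (n : ℕ) :
    (cInv n)⁻¹ = ∏ j : Fin n, ((n - 1 - (j : ℕ)).factorial : ℝ)⁻¹ := by
  rw [prod_inv_distrib, Fin.prod_univ_eq_prod_range (fun j => ((n - 1 - j).factorial : ℝ)),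
    prod_range_reflect (fun j => (j.factorial : ℝ)), cInv]

/-- For (n−1)-times continuously differentiable `f_1,…,f_n`, the ratio
det[f_i(x_j)]/Δ_n(x) extends continuously to ℝ^n, its value on the diagonal is
`c_n · det[f_i^{(n−j)}(x)]`, and hence the generalized Wronskian agrees with the
classical Wronskian determinant `det[f_i^{(n−j)}(x)]`. -/
theorem generalized_wronskian_eq_classical (n : ℕ) (hn : 1 ≤ n)
    (f : Fin n → ℝ → ℝ)
    (hf : ∀ i, ContDiff ℝ ((n - 1 : ℕ) : ℕ∞) (f i)) :
    ∃ F : (Fin n → ℝ) → ℝ, ExtendsRatio f F ∧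
      (∀ x : ℝ, F (fun _ => x) =
        (cInv n)⁻¹ *
          Matrix.det (Matrix.of fun i j : Fin n =>
            iteratedDeriv (n - 1 - (j : ℕ)) (f i) x)) ∧
      (∀ x : ℝ, cInv n * F (fun _ => x) =
        Matrix.det (Matrix.of fun i j : Fin n =>
          iteratedDeriv (n - 1 - (j : ℕ)) (f i) x)) := by
  have extension (i j : Fin n) := exists_continuous_extension_dividedDiff
    ((hf i).of_le (Nat.cast_le.2 (Nat.sub_le (n - 1) j)))
    (show #(Ici j) = n - 1 - j + 1 by rw [Fin.card_Ici]; lia)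
  choose G G_cont G_eq G_diag using extension
  have diag (x : ℝ) : Matrix.det (Matrix.of fun i j => G i j fun _ => x) =
      (cInv n)⁻¹ * Matrix.det (Matrix.of fun i j : Fin n =>
        iteratedDeriv (n - 1 - (j : ℕ)) (f i) x) := by
    rw [inv_cInv_eq_prod_fin, ← Matrix.det_mul_row]
    simp only [G_diag, Matrix.of_apply, smul_eq_mul]
  refine ⟨fun v => Matrix.det (Matrix.of fun i j => G i j v), ⟨?_, fun v hv => ?_⟩, diag,
    fun x => ?_⟩
  · exact Continuous.matrix_det (continuous_matrix fun i j => G_cont i j)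
  · simp only [G_eq _ _ v hv.injOn]
    exact det_dividedDiff_Ici f v
  · beta_reduce
    rw [diag, mul_inv_cancel_left₀ (cInv_ne_zero n)]
end
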